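/- For any quaternions u₁, u, u₂ over ℝ, the triple commutator [u₁, u, u₂] = (u₁ * (star u) * u₂ - u₂ * (star u) * u₁) / 2 equals ⟪cross u₁ u, u₂⟫ • 1 - (u₁.re) • (cross u u₂) + (u.re) • (cross u₁ u₂) - (u₂.re) • (cross u₁ u), where cross a b := (a * b - b * a) / 2 and a.re denotes the real part of a. -/

import Mathlib

/-!
Split each quaternion into its real and imaginary part. As real numbers are central, expanding
`u₁ * star u * u₂ - u₂ * star u * u₁` leaves one commutator of imaginary parts for each real part,
and the term `z * y * x - x * y * z` with `x`, `y`, `z` the imaginary parts of `u₁`, `u`, `u₂`.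
Conjugation sends `x * y * z` to `-(z * y * x)`, so this last term is the scalar
`-2 * (x * y * z).re`, which is also the value of the inner product of `⁅u₁, u⁆` with `u₂`.
-/

open Quaternion RealInnerProductSpace

/-- The cross product of two quaternions. -/
noncomputable def cross (a b : ℍ) : ℍ := (a * b - b * a) / 2

theorem triple_commutator_smul_one_add {R A : Type*} [CommRing R] [Ring A] [Algebra R A]
    (r s t : R) (x y z : A) :
    (r • 1 + x) * (s • 1 - y) * (t • 1 + z) - (t • 1 + z) * (s • 1 - y) * (r • 1 + x) =
      z * y * x - x * y * z - r • ⁅y, z⁆ + s • ⁅x, z⁆ - t • ⁅x, y⁆ := by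
  simp only [Ring.lie_def, add_mul, mul_add, sub_mul, mul_sub, smul_mul_assoc, mul_smul_comm,
    one_mul, mul_one]
  module

theorem div_ofNat_eq_inv_smul (K : Type*) {A : Type*} [Semifield K] [DivisionSemiring A]
    [Algebra K A] (a : A) (n : ℕ) [n.AtLeastTwo] :
    a / ofNat(n) = (ofNat(n) : K)⁻¹ • a := by
  rw [div_eq_mul_inv, Algebra.smul_def, Algebra.commutes, map_inv₀, map_ofNat]

section Quaternion

variable {R : Type*} [CommRing R]

theorem quaternion_eq_re_smul_one_add_im (a : ℍ[R]) : a = a.re • 1 + a.im := by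
  rw [← coe_mul_eq_smul, mul_one, re_add_im]

theorem quaternion_star_eq_re_smul_one_sub_im (a : ℍ[R]) : star a = a.re • 1 - a.im := by
  rw [star_eq_two_re_sub, ← sub_re_self, ← coe_mul_eq_smul, mul_one, two_mul, coe_add]
  abel

theorem quaternion_lie_eq_lie_im (a b : ℍ[R]) : ⁅a, b⁆ = ⁅a.im, b.im⁆ := by
  conv_lhs => rw [quaternion_eq_re_smul_one_add_im a, quaternion_eq_re_smul_one_add_im b]
  simp only [Ring.lie_def, add_mul, mul_add, smul_mul_assoc, mul_smul_comm, one_mul, mul_one]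
  module

theorem quaternion_re_mul_comm (a b : ℍ[R]) : (a * b).re = (b * a).re := by
  simp only [re_mul]
  ring

theorem quaternion_im_mul_im_mul_im_sub_reverse (a b c : ℍ[R]) :
    c.im * b.im * a.im - a.im * b.im * c.im = (-2 * (a.im * b.im * c.im).re) • 1 := by
  have reverse_eq : c.im * b.im * a.im = -star (a.im * b.im * c.im) := by
    simp [mul_assoc]
  rw [reverse_eq, ← neg_add', star_add_self', neg_mul, neg_smul, ← coe_mul_eq_smul, mul_one]

theorem quaternion_re_lie_mul_star (a b c : ℍ[R]) :
    (⁅a, b⁆ * star c).re = -2 * (a.im * b.im * c.im).re := by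
  set p := a.im * b.im
  have lie_eq : ⁅a, b⁆ = p - star p := by
    simp [p, quaternion_lie_eq_lie_im a b, Ring.lie_def]
  have star_sub_self : star c - c = (-2 : R) • c.im := by
    rw [quaternion_star_eq_re_smul_one_sub_im, ← sub_re_self, ← coe_mul_eq_smul, mul_one]
    module
  calc (⁅a, b⁆ * star c).re
      = (p * star c).re - (star (c * p)).re := by rw [lie_eq, sub_mul, re_sub, star_mul c p]
    _ = (p * star c).re - (p * c).re := by rw [re_star, quaternion_re_mul_comm c p]
    _ = (p * (star c - c)).re := by rw [mul_sub, re_sub]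
    _ = -2 * (p * c.im).re := by rw [star_sub_self, mul_smul_comm, re_smul, smul_eq_mul]

theorem quaternion_triple_commutator_general (u₁ u u₂ : ℍ[R]) :
    u₁ * star u * u₂ - u₂ * star u * u₁ =
      (⁅u₁, u⁆ * star u₂).re • (1 : ℍ[R]) - u₁.re • ⁅u, u₂⁆ + u.re • ⁅u₁, u₂⁆
        - u₂.re • ⁅u₁, u⁆ := by
  rw [quaternion_re_lie_mul_star, ← quaternion_im_mul_im_mul_im_sub_reverse,
    quaternion_lie_eq_lie_im u u₂, quaternion_lie_eq_lie_im u₁ u₂, quaternion_lie_eq_lie_im u₁ u,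
    ← triple_commutator_smul_one_add, ← quaternion_star_eq_re_smul_one_sub_im,
    ← quaternion_eq_re_smul_one_add_im, ← quaternion_eq_re_smul_one_add_im]

end Quaternion

theorem cross_eq_inv_two_smul_lie (a b : ℍ) : cross a b = (2⁻¹ : ℝ) • ⁅a, b⁆ := by
  rw [cross, div_ofNat_eq_inv_smul ℝ, Ring.lie_def]

theorem quaternion_triple_commutator (u₁ u u₂ : ℍ) :
    (u₁ * star u * u₂ - u₂ * star u * u₁) / 2 =
      ⟪cross u₁ u, u₂⟫ • (1 : ℍ) - u₁.re • cross u u₂ + u.re • cross u₁ u₂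
        - u₂.re • cross u₁ u := by
  simp only [div_ofNat_eq_inv_smul ℝ, quaternion_triple_commutator_general,
    cross_eq_inv_two_smul_lie, real_inner_smul_left, inner_def]
  module
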